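/- Let d ≥ 3 be an integer and let h : [0, 1/π] → [0, 1] be the inverse function of g. There exists a constant C > 0 such that for every μ ≥ 2 and every integer l with 0 ≤ l < μ − d/2 + 1, | Σ_{k} ( μ·h((k − 1/4)/μ) − l − (d−3)/2 ) − ∫_{l+(d−3)/2}^{μ} μ·g(t/μ) dt + (1/4)(μ − l − (d−3)/2) | ≤ C μ^{1/3}, where the sum is over all integers k ≥ 1 with k − 1/4 ≤ μ·g((l + d/2 − 1)/μ). -/

import Mathlib

open Real Set

/-- The function `g(t) = (√(1-t²) - t arccos t)/π`. -/
noncomputable def gfun (t : ℝ) : ℝ := (Real.sqrt (1 - t ^ 2) - t * Real.arccos t) / π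


lemma g_hasDeriv {t : ℝ} (h0 : 0 < t) (h1 : t < 1) : HasDerivAt gfun (-arccos t / π) t := by
  have hp : 0 < 1 - t ^ 2 := by nlinarith
  have ha := hasDerivAt_arccos (x := t) (by linarith) (by linarith)
  have hs : HasDerivAt (fun t : ℝ => √(1 - t ^ 2)) (-(2 * t) / (2 * √(1 - t ^ 2))) t := by
    have : HasDerivAt (fun t : ℝ => 1 - t ^ 2) (-(2 * t)) t := by
      simpa using (hasDerivAt_pow 2 t).const_sub 1
    exact this.sqrt hp.ne'
  have := (hs.sub ((hasDerivAt_id t).mul ha)).div_const π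
  refine this.congr_deriv ?_
  have hq : √(1 - t ^ 2) ≠ 0 := (Real.sqrt_pos.2 hp).ne'
  simp only [id]
  field_simp
  ring

lemma g_cont : Continuous gfun := by
  unfold gfun
  have := Real.continuous_arccos
  fun_prop

lemma g_zero : gfun 0 = 1 / π := by simp [gfun]

lemma g_one : gfun 1 = 0 := by simp [gfun]

lemma g_anti : StrictAntiOn gfun (Icc 0 1) := by
  refine strictAntiOn_of_deriv_neg (convex_Icc 0 1) g_cont.continuousOn ?_
  intro x hx
  rw [interior_Icc] at hx
  rw [(g_hasDeriv hx.1 hx.2).deriv]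
  have := Real.arccos_pos.2 hx.2
  have := div_pos this pi_pos
  rw [neg_div]; linarith

lemma g_convex : ConvexOn ℝ (Icc 0 1) gfun := by
  refine MonotoneOn.convexOn_of_deriv (convex_Icc 0 1) g_cont.continuousOn ?_ ?_
  · intro x hx
    rw [interior_Icc] at hx
    exact (g_hasDeriv hx.1 hx.2).differentiableAt.differentiableWithinAt
  · intro x hx y hy hxy
    rw [interior_Icc] at hx hy
    rw [(g_hasDeriv hx.1 hx.2).deriv, (g_hasDeriv hy.1 hy.2).deriv]
    have := Real.antitone_arccos hxy
    have := pi_pos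
    gcongr

lemma g_lip {s t : ℝ} (h0 : 0 ≤ s) (hst : s ≤ t) (h1 : t ≤ 1) : gfun s - gfun t ≤ (t - s) / 2 := by
  have key : MonotoneOn (fun x => gfun x + x / 2) (Icc 0 1) := by
    have hd : ∀ x ∈ Ioo (0:ℝ) 1,
        HasDerivAt (fun x => gfun x + x / 2) (-arccos x / π + 1 / 2) x := fun x hx =>
      (g_hasDeriv hx.1 hx.2).add ((hasDerivAt_id x).div_const 2)
    refine monotoneOn_of_deriv_nonneg (convex_Icc 0 1)
      (g_cont.add (continuous_id.div_const 2)).continuousOn ?_ ?_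
    · intro x hx
      rw [interior_Icc] at hx
      exact (hd x hx).differentiableAt.differentiableWithinAt
    · intro x hx
      rw [interior_Icc] at hx
      rw [(hd x hx).deriv]
      have h1 : arccos x ≤ π / 2 := Real.arccos_le_pi_div_two.2 hx.1.le
      have : arccos x / π ≤ 1 / 2 := by
        rw [div_le_iff₀ pi_pos]; linarith
      rw [neg_div]; linarith
  have := key ⟨h0, by linarith⟩ ⟨by linarith, h1⟩ hst
  simp only at this
  linarith

lemma arccos_lower {x : ℝ} (h0 : 0 ≤ x) (h1 : x ≤ 1) : √(1 - x) ≤ arccos x := by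
  apply Real.sqrt_le_iff.2 ⟨arccos_nonneg x, ?_⟩
  have := Real.one_sub_sq_div_two_le_cos (x := arccos x)
  rw [Real.cos_arccos (by linarith) h1] at this
  nlinarith [sq_nonneg (arccos x)]

lemma g_lower {t : ℝ} (h0 : 0 ≤ t) (h1 : t ≤ 1) :
    2 / (3 * π) * ((1 - t) * √(1 - t)) ≤ gfun t := by
  have key : AntitoneOn (fun x => gfun x - 2 / (3 * π) * ((1 - x) * √(1 - x))) (Icc 0 1) := by
    have hd : ∀ x ∈ Ioo (0:ℝ) 1,
        HasDerivAt (fun x => gfun x - 2 / (3 * π) * ((1 - x) * √(1 - x)))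
          (-arccos x / π + √(1 - x) / π) x := fun x hx => by
      have hp : 0 < 1 - x := by linarith [hx.2]
      have h2 : HasDerivAt (fun x : ℝ => 1 - x) (-1) x := by
        simpa using (hasDerivAt_id x).const_sub 1
      have h3 := (h2.mul (h2.sqrt hp.ne')).const_mul (2 / (3 * π))
      refine ((g_hasDeriv hx.1 hx.2).sub h3).congr_deriv ?_
      have hq : √(1 - x) ≠ 0 := (Real.sqrt_pos.2 hp).ne'
      have hs : √(1 - x) ^ 2 = 1 - x := Real.sq_sqrt hp.le
      field_simp
      linear_combination (-1) * hs
    refine antitoneOn_of_deriv_nonpos (convex_Icc 0 1) ?_ ?_ ?_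
    · have := g_cont
      fun_prop
    · intro x hx
      rw [interior_Icc] at hx
      exact (hd x hx).differentiableAt.differentiableWithinAt
    · intro x hx
      rw [interior_Icc] at hx
      rw [(hd x hx).deriv]
      have h1 := arccos_lower hx.1.le hx.2.le
      have : √(1 - x) / π ≤ arccos x / π := by
        have := pi_pos
        gcongr
      rw [neg_div]; linarith
  have := key ⟨h0, h1⟩ ⟨zero_le_one, le_rfl⟩ h1
  simp [g_one] at this
  simpa using this

/-- Euler–Maclaurin for convex antitone functions. -/
lemma conv_upper {F : ℝ → ℝ} (hc : ConvexOn ℝ (Ici 0) F) (ha : AntitoneOn F (Ici 0)) (M : ℕ) :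
    ∑ j ∈ Finset.range M, F (j + 3 / 4) ≤ ∫ y in (1/4 : ℝ)..(M + 1 / 4), F y := by
  have hii : ∀ x y : ℝ, 0 ≤ x → 0 ≤ y → IntervalIntegrable F MeasureTheory.volume x y := by
    intro x y hx hy
    apply AntitoneOn.intervalIntegrable
    exact ha.mono fun z hz => le_trans (le_min hx hy) hz.1
  induction M with
  | zero => simp
  | succ M ih =>
    have hM : (0:ℝ) ≤ M := Nat.cast_nonneg M
    rw [Finset.sum_range_succ, ← intervalIntegral.integral_add_adjacent_intervals
      (b := (M + 1 / 4 : ℝ)) (hii _ _ (by norm_num) (by positivity))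
      (hii _ _ (by positivity) (by positivity))]
    refine add_le_add ih ?_
    push_cast
    have e1 : ∫ y in (M + 1/4 : ℝ)..(M + 1 + 1 / 4), F y =
        ∫ y in (M + 1/4 : ℝ)..(M + 1 + 1 / 4), F (2 * M + 3 / 2 - y) := by
      rw [intervalIntegral.integral_comp_sub_left]
      congr 1 <;> ring
    have i1 := hii (M + 1/4 : ℝ) (M + 1 + 1 / 4) (by positivity) (by positivity)
    have i2 : IntervalIntegrable (fun y => F (2 * M + 3 / 2 - y)) MeasureTheory.volume
        (M + 1/4 : ℝ) (M + 1 + 1 / 4) := by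
      have := (i1.comp_sub_left (2 * M + 3 / 2)).symm
      convert this using 1 <;> ring
    have e2 : ∫ y in (M + 1/4 : ℝ)..(M + 1 + 1 / 4), (2 * F (M + 3 / 4)) ≤
        ∫ y in (M + 1/4 : ℝ)..(M + 1 + 1 / 4), (F y + F (2 * M + 3 / 2 - y)) := by
      refine intervalIntegral.integral_mono_on (by linarith) (by simp) (i1.add i2) ?_
      intro y hy
      have hcc := hc.2
      have := hcc (x := y) (y := 2 * M + 3 / 2 - y) (by simp; linarith [hy.1])
        (by simp; linarith [hy.2]) (a := 1/2) (b := 1/2) (by norm_num) (by norm_num) (by norm_num)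
      simp only [smul_eq_mul] at this
      have e : 1 / 2 * y + 1 / 2 * (2 * M + 3 / 2 - y) = (M + 3 / 4 : ℝ) := by ring
      rw [e] at this
      linarith
    rw [intervalIntegral.integral_add i1 i2, ← e1] at e2
    simp at e2
    norm_num at e2 ⊢
    linarith

lemma conv_lower {F : ℝ → ℝ} (hc : ConvexOn ℝ (Ici 0) F) (ha : AntitoneOn F (Ici 0)) (M : ℕ) :
    ∫ y in (3/4 : ℝ)..(M + 3 / 4), F y ≤
      ∑ j ∈ Finset.range M, F (j + 3 / 4) - F (3 / 4) / 2 + F (M + 3 / 4) / 2 := by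
  have hii : ∀ x y : ℝ, 0 ≤ x → 0 ≤ y → IntervalIntegrable F MeasureTheory.volume x y := by
    intro x y hx hy
    apply AntitoneOn.intervalIntegrable
    exact ha.mono fun z hz => le_trans (le_min hx hy) hz.1
  induction M with
  | zero => simp
  | succ M ih =>
    have hM : (0:ℝ) ≤ M := Nat.cast_nonneg M
    rw [Finset.sum_range_succ, ← intervalIntegral.integral_add_adjacent_intervals
      (b := (M + 3 / 4 : ℝ)) (hii _ _ (by norm_num) (by positivity))
      (hii _ _ (by positivity) (by positivity))]
    push_cast
    have i1 := hii (M + 3/4 : ℝ) (M + 1 + 3 / 4) (by positivity) (by positivity)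
    have e2 : ∫ y in (M + 3/4 : ℝ)..(M + 1 + 3 / 4), F y ≤
        ∫ y in (M + 3/4 : ℝ)..(M + 1 + 3 / 4),
          (F (M + 3 / 4) + (y - (M + 3 / 4)) * (F (M + 1 + 3 / 4) - F (M + 3 / 4))) := by
      refine intervalIntegral.integral_mono_on (by linarith) i1
        (Continuous.intervalIntegrable (by fun_prop) _ _) ?_
      intro y hy
      have hcc := hc.2
      have := hcc (x := M + 3 / 4) (y := M + 1 + 3 / 4) (by simp; linarith)
        (by simp; linarith) (a := 1 - (y - (M + 3 / 4))) (b := y - (M + 3 / 4))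
        (by linarith [hy.2]) (by linarith [hy.1]) (by ring)
      simp only [smul_eq_mul] at this
      have e : (1 - (y - (M + 3 / 4))) * (M + 3 / 4) + (y - (M + 3 / 4)) * (M + 1 + 3 / 4) = y := by
        ring
      rw [e] at this
      linarith
    have e3 : ∫ y in (M + 3/4 : ℝ)..(M + 1 + 3 / 4),
          (F (M + 3 / 4) + (y - (M + 3 / 4)) * (F (M + 1 + 3 / 4) - F (M + 3 / 4))) =
          (F (M + 3 / 4) + F (M + 1 + 3 / 4)) / 2 := by
      rw [intervalIntegral.integral_add (by simp) (Continuous.intervalIntegrable (by fun_prop) _ _),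
        intervalIntegral.integral_mul_const, intervalIntegral.integral_sub
          (Continuous.intervalIntegrable (by fun_prop) _ _) (by simp)]
      simp
      ring
    linarith

lemma conv_main {F : ℝ → ℝ} (hc : ConvexOn ℝ (Ici 0) F) (ha : AntitoneOn F (Ici 0)) (M : ℕ)
    (hp : ∀ y, 0 ≤ F y) (h0 : F (M + 3 / 4) = 0) :
    |∑ j ∈ Finset.range M, F (j + 3 / 4) - (∫ y in (0:ℝ)..(M + 3 / 4), F y) + 1 / 4 * F 0| ≤
      F 0 - F (3 / 4) := by
  have hii : ∀ x y : ℝ, 0 ≤ x → 0 ≤ y → IntervalIntegrable F MeasureTheory.volume x y := by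
    intro x y hx hy
    apply AntitoneOn.intervalIntegrable
    exact ha.mono fun z hz => le_trans (le_min hx hy) hz.1
  have hM : (0:ℝ) ≤ M := Nat.cast_nonneg M
  have u := conv_upper hc ha M
  have w := conv_lower hc ha M
  have a1 := intervalIntegral.integral_add_adjacent_intervals
    (hii 0 (3/4) (by norm_num) (by norm_num)) (hii (3/4) (M + 3/4) (by norm_num) (by positivity))
  have a2 := intervalIntegral.integral_add_adjacent_intervals
    (hii 0 (1/4) (by norm_num) (by norm_num)) (hii (1/4) (M + 1/4) (by norm_num) (by positivity))
  have a3 := intervalIntegral.integral_add_adjacent_intervals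
    (hii 0 (M + 1/4) (by norm_num) (by positivity))
    (hii (M + 1/4) (M + 3/4) (by positivity) (by positivity))
  have b1 : 0 ≤ ∫ y in (M + 1/4 : ℝ)..(M + 3/4), F y :=
    intervalIntegral.integral_nonneg (by linarith) fun y _ => hp y
  have b2 : ∫ y in (0 : ℝ)..(3/4), F y ≤ ∫ y in (0 : ℝ)..(3/4), F 0 :=
    intervalIntegral.integral_mono_on (by norm_num) (hii _ _ (by norm_num) (by norm_num)) (by simp)
      fun y hy => ha (by simp) (by simpa using hy.1) hy.1
  have b3 : ∫ y in (0 : ℝ)..(1/4), F (1/4) ≤ ∫ y in (0 : ℝ)..(1/4), F y :=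
    intervalIntegral.integral_mono_on (by norm_num) (by simp) (hii _ _ (by norm_num) (by norm_num))
      fun y hy => ha (by simpa using hy.1) (by simp) hy.2
  have c1 : F (3/4) ≤ F (1/4) := ha (by simp) (by simp; norm_num) (by norm_num)
  have c2 : F (1/4) ≤ F 0 := ha (by simp) (by simp) (by norm_num)
  rw [intervalIntegral.integral_const, smul_eq_mul] at b2 b3
  rw [abs_le]
  constructor <;> linarith

/-- The extension of `h` by zero. -/
noncomputable def hext (h : ℝ → ℝ) (y : ℝ) : ℝ := if y ≤ 1 / π then h y else 0

section ext
variable {h : ℝ → ℝ}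
    (h_maps : ∀ y ∈ Set.Icc (0:ℝ) (1 / π), h y ∈ Set.Icc (0:ℝ) 1)
    (h_right_inv : ∀ y ∈ Set.Icc (0:ℝ) (1 / π), gfun (h y) = y)

lemma hext_mem (h_maps : ∀ y ∈ Set.Icc (0:ℝ) (1 / π), h y ∈ Set.Icc (0:ℝ) 1)
    {y : ℝ} (hy : 0 ≤ y) : hext h y ∈ Icc (0:ℝ) 1 := by
  unfold hext
  split_ifs with h1
  · exact h_maps y ⟨hy, h1⟩
  · simp

lemma hext_le_iff (h_maps : ∀ y ∈ Set.Icc (0:ℝ) (1 / π), h y ∈ Set.Icc (0:ℝ) 1)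
    (h_right_inv : ∀ y ∈ Set.Icc (0:ℝ) (1 / π), gfun (h y) = y)
    {y t : ℝ} (hy : 0 ≤ y) (ht : t ∈ Icc (0:ℝ) 1) : hext h y ≤ t ↔ gfun t ≤ y := by
  unfold hext
  split_ifs with h1
  · rw [← g_anti.le_iff_ge ht (h_maps y ⟨hy, h1⟩), h_right_inv y ⟨hy, h1⟩]
  · refine ⟨fun _ => ?_, fun _ => ht.1⟩
    have := g_anti.antitoneOn ⟨le_rfl, zero_le_one⟩ ht ht.1
    rw [g_zero] at this
    linarith

lemma g_hext_le (h_maps : ∀ y ∈ Set.Icc (0:ℝ) (1 / π), h y ∈ Set.Icc (0:ℝ) 1)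
    (h_right_inv : ∀ y ∈ Set.Icc (0:ℝ) (1 / π), gfun (h y) = y)
    {y : ℝ} (hy : 0 ≤ y) : gfun (hext h y) ≤ y :=
  (hext_le_iff h_maps h_right_inv hy (hext_mem h_maps hy)).1 le_rfl

lemma hext_zero (h_maps : ∀ y ∈ Set.Icc (0:ℝ) (1 / π), h y ∈ Set.Icc (0:ℝ) 1)
    (h_right_inv : ∀ y ∈ Set.Icc (0:ℝ) (1 / π), gfun (h y) = y) : hext h 0 = 1 := by
  have hm := hext_mem (h := h) h_maps le_rfl
  have := g_hext_le h_maps h_right_inv le_rfl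
  have this : gfun (hext h 0) ≤ gfun 1 := this.trans g_one.ge
  exact le_antisymm hm.2 ((g_anti.le_iff_ge hm ⟨zero_le_one, le_rfl⟩).1 this)

lemma hext_anti (h_maps : ∀ y ∈ Set.Icc (0:ℝ) (1 / π), h y ∈ Set.Icc (0:ℝ) 1)
    (h_right_inv : ∀ y ∈ Set.Icc (0:ℝ) (1 / π), gfun (h y) = y) :
    AntitoneOn (hext h) (Ici 0) := by
  intro x hx y hy hxy
  rw [hext_le_iff h_maps h_right_inv hy (hext_mem h_maps hx)]
  exact (g_hext_le h_maps h_right_inv hx).trans hxy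

lemma hext_convex (h_maps : ∀ y ∈ Set.Icc (0:ℝ) (1 / π), h y ∈ Set.Icc (0:ℝ) 1)
    (h_right_inv : ∀ y ∈ Set.Icc (0:ℝ) (1 / π), gfun (h y) = y) :
    ConvexOn ℝ (Ici 0) (hext h) := by
  refine ⟨convex_Ici 0, ?_⟩
  intro x hx y hy a b ha hb hab
  have mx := hext_mem (h := h) h_maps hx
  have my := hext_mem (h := h) h_maps hy
  rw [hext_le_iff h_maps h_right_inv (convex_Ici 0 hx hy ha hb hab)
    (convex_Icc 0 1 mx my ha hb hab)]
  refine (g_convex.2 mx my ha hb hab).trans ?_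
  simp only [smul_eq_mul]
  have := g_hext_le h_maps h_right_inv hx
  have := g_hext_le h_maps h_right_inv hy
  gcongr

end ext

/-- The truncated function `y ↦ max (μ h(y/μ) - a) 0`. -/
noncomputable def Ffun (h : ℝ → ℝ) (μ a y : ℝ) : ℝ := max (μ * hext h (y / μ) - a) 0

section F
variable {h : ℝ → ℝ}

lemma F_anti (h_maps : ∀ y ∈ Set.Icc (0:ℝ) (1 / π), h y ∈ Set.Icc (0:ℝ) 1)
    (h_right_inv : ∀ y ∈ Set.Icc (0:ℝ) (1 / π), gfun (h y) = y) {μ a : ℝ} (hμ : 0 < μ) :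
    AntitoneOn (Ffun h μ a) (Ici 0) := by
  intro x hx y hy hxy
  simp only [mem_Ici] at hx hy
  have := hext_anti h_maps h_right_inv (a := x / μ) (b := y / μ) (by simp; positivity)
    (by simp; positivity) (by gcongr)
  unfold Ffun
  gcongr

lemma F_convex (h_maps : ∀ y ∈ Set.Icc (0:ℝ) (1 / π), h y ∈ Set.Icc (0:ℝ) 1)
    (h_right_inv : ∀ y ∈ Set.Icc (0:ℝ) (1 / π), gfun (h y) = y) {μ a : ℝ} (hμ : 0 < μ) :
    ConvexOn ℝ (Ici 0) (Ffun h μ a) := by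
  have h1 : ConvexOn ℝ (Ici 0) (fun y => μ * hext h (y / μ) - a) := by
    refine ⟨convex_Ici 0, ?_⟩
    intro x hx y hy p q hp hq hpq
    simp only [mem_Ici] at hx hy
    have := (hext_convex h_maps h_right_inv).2 (x := x / μ) (y := y / μ) (by simp; positivity)
      (by simp; positivity) hp hq hpq
    simp only [smul_eq_mul] at this ⊢
    rw [show p * (x / μ) + q * (y / μ) = (p * x + q * y) / μ by ring] at this
    have h2 := mul_le_mul_of_nonneg_left this hμ.le
    have h3 : a = p * a + q * a := by rw [← add_mul, hpq, one_mul]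
    linarith
  exact h1.sup (convexOn_const 0 (convex_Ici 0))

lemma F_integral (h_maps : ∀ y ∈ Set.Icc (0:ℝ) (1 / π), h y ∈ Set.Icc (0:ℝ) 1)
    (h_right_inv : ∀ y ∈ Set.Icc (0:ℝ) (1 / π), gfun (h y) = y) {μ a Y : ℝ} (hμ : 0 < μ)
    (ha : 0 ≤ a) (haμ : a ≤ μ) (hY : μ * gfun (a / μ) ≤ Y) :
    ∫ t in a..μ, μ * gfun (t / μ) = ∫ y in (0:ℝ)..Y, Ffun h μ a y := by
  have hmem : ∀ t, 0 ≤ t → t ≤ μ → t / μ ∈ Icc (0:ℝ) 1 := fun t h0 h1 =>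
    ⟨by positivity, (div_le_one hμ).2 h1⟩
  have gnn : ∀ t ∈ Icc (0:ℝ) 1, 0 ≤ gfun t := fun t ht => by
    have := g_anti.antitoneOn ht ⟨zero_le_one, le_rfl⟩ ht.2
    rwa [g_one] at this
  have hY0 : 0 ≤ Y := (mul_nonneg hμ.le (gnn _ (hmem a ha haμ))).trans hY
  have hcont : Continuous fun t => μ * gfun (t / μ) := by
    have := g_cont
    fun_prop
  rw [intervalIntegral.integral_of_le haμ, intervalIntegral.integral_of_le hY0,
    MeasureTheory.Integrable.integral_eq_integral_meas_lt]
  · have key : ∀ y ∈ Ioi (0:ℝ),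
        (MeasureTheory.volume.restrict (Ioc a μ)).real {t | y < μ * gfun (t / μ)} =
          Ffun h μ a y := by
      intro y hy
      simp only [mem_Ioi] at hy
      have hy' : 0 ≤ y / μ := by positivity
      rw [MeasureTheory.measureReal_restrict_apply (measurableSet_lt measurable_const
        hcont.measurable)]
      have hs : {t | y < μ * gfun (t / μ)} ∩ Ioc a μ = Ioo a (μ * hext h (y / μ)) := by
        have iff1 : ∀ t, a < t → t ≤ μ →
            (y < μ * gfun (t / μ) ↔ t < μ * hext h (y / μ)) := by
          intro t h1 h2
          have := hext_le_iff h_maps h_right_inv hy' (hmem t (by linarith) h2)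
          rw [← not_iff_not]
          push Not
          rw [← div_le_div_iff_of_pos_right hμ, mul_div_cancel_left₀ _ hμ.ne',
            ← this, le_div_iff₀ hμ, mul_comm]
        ext t
        simp only [mem_inter_iff, mem_ofPred_eq, mem_Ioc, mem_Ioo]
        constructor
        · rintro ⟨h1, h2, h3⟩
          exact ⟨h2, (iff1 t h2 h3).1 h1⟩
        · rintro ⟨h1, h2⟩
          have h3 : t ≤ μ := by
            have := (hext_mem (h := h) h_maps hy').2
            nlinarith
          exact ⟨(iff1 t h1 h3).2 h2, h1, h3⟩
      rw [hs]
      simp [MeasureTheory.Measure.real, Real.volume_Ioo, Ffun, ENNReal.toReal_ofReal']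
    rw [MeasureTheory.setIntegral_congr_fun measurableSet_Ioi key]
    apply MeasureTheory.setIntegral_eq_of_subset_of_forall_sdiff_eq_zero measurableSet_Ioi
    · exact fun x hx => hx.1
    · rintro y ⟨h1, h2⟩
      simp only [mem_Ioi] at h1
      have h3 : Y < y := by
        by_contra hh
        exact h2 ⟨h1, not_lt.1 hh⟩
      have h4 : hext h (y / μ) ≤ a / μ := by
        rw [hext_le_iff h_maps h_right_inv (by positivity) (hmem a ha haμ), le_div_iff₀ hμ]
        linarith
      rw [le_div_iff₀ hμ] at h4
      exact max_eq_right (by linarith)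
  · exact hcont.integrableOn_Ioc
  · filter_upwards [MeasureTheory.ae_restrict_mem measurableSet_Ioc] with t ht
    exact mul_nonneg hμ.le (gnn _ (hmem t (by linarith [ht.1]) ht.2))

lemma F_drop (h_maps : ∀ y ∈ Set.Icc (0:ℝ) (1 / π), h y ∈ Set.Icc (0:ℝ) 1)
    (h_right_inv : ∀ y ∈ Set.Icc (0:ℝ) (1 / π), gfun (h y) = y) {μ a : ℝ} (hμ : 0 < μ)
    (haμ : a ≤ μ) :
    Ffun h μ a 0 = μ - a ∧ Ffun h μ a 0 - Ffun h μ a (3 / 4) ≤ 4 * μ ^ ((1:ℝ) / 3) := by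
  have e0 : Ffun h μ a 0 = μ - a := by
    unfold Ffun
    rw [zero_div, hext_zero h_maps h_right_inv, mul_one]
    exact max_eq_left (by linarith)
  refine ⟨e0, ?_⟩
  set m := μ ^ ((1:ℝ) / 3) with hm
  have hmpos : 0 < m := by positivity
  have hm3 : m ^ 3 = μ := by
    rw [hm, ← Real.rpow_natCast, ← Real.rpow_mul hμ.le]; norm_num
  have hge : μ * hext h (3 / 4 / μ) - a ≤ Ffun h μ a (3 / 4) := le_max_left _ _
  have hmm := hext_mem (h := h) h_maps (y := 3 / 4 / μ) (by positivity)
  suffices 1 - 4 / m ^ 2 ≤ hext h (3 / 4 / μ) by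
    have h2 := mul_le_mul_of_nonneg_left this hμ.le
    have h3 : μ * (1 - 4 / m ^ 2) = μ - 4 * m := by
      rw [← hm3]; field_simp
    linarith
  by_contra hcon
  push Not at hcon
  have ht0 : 0 ≤ 1 - 4 / m ^ 2 := hmm.1.trans hcon.le
  have ht1 : 1 - 4 / m ^ 2 ≤ 1 := by
    have : 0 ≤ 4 / m ^ 2 := by positivity
    linarith
  have h1 := (hext_le_iff h_maps h_right_inv (y := 3 / 4 / μ) (by positivity) ⟨ht0, ht1⟩).1 hcon.le
  have h2 := g_lower ht0 ht1
  have h3 : 1 - (1 - 4 / m ^ 2) = (2 / m) ^ 2 := by field_simp; norm_num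
  rw [h3, Real.sqrt_sq (by positivity)] at h2
  have h4 := h2.trans h1
  rw [← hm3] at h4
  have h5 : 2 / (3 * π) * ((2 / m) ^ 2 * (2 / m)) = 16 / (3 * π) / m ^ 3 := by
    field_simp; norm_num
  rw [h5, div_le_div_iff_of_pos_right (by positivity), div_le_iff₀ (by positivity)] at h4
  linarith [pi_lt_four]

end F

lemma main_core (h : ℝ → ℝ)
    (h_maps : ∀ y ∈ Set.Icc (0:ℝ) (1 / π), h y ∈ Set.Icc (0:ℝ) 1)
    (h_right_inv : ∀ y ∈ Set.Icc (0:ℝ) (1 / π), gfun (h y) = y) {μ a : ℝ} (hμ : 2 ≤ μ)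
    (ha : 0 ≤ a) (haμ : a + 1 / 2 < μ) :
    |(∑' k : ℕ, if 1 ≤ k ∧ (k : ℝ) - 1 / 4 ≤ μ * gfun ((a + 1 / 2) / μ) then
            μ * h (((k : ℝ) - 1 / 4) / μ) - a else 0) -
          (∫ t in a..μ, μ * gfun (t / μ)) + (1 / 4) * (μ - a)| ≤ 5 * μ ^ ((1 : ℝ) / 3) := by
  have hμ0 : 0 < μ := by linarith
  have hmem : ∀ t, 0 ≤ t → t ≤ μ → t / μ ∈ Icc (0:ℝ) 1 := fun t h0 h1 =>
    ⟨by positivity, (div_le_one hμ0).2 h1⟩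
  have ma := hmem a ha (by linarith)
  have mb := hmem (a + 1 / 2) (by linarith) (by linarith)
  have hlip := g_lip ma.1 (t := (a + 1 / 2) / μ) (by gcongr; linarith) mb.2
  have gnn : 0 ≤ gfun ((a + 1 / 2) / μ) := by
    have := g_anti.antitoneOn mb ⟨zero_le_one, le_rfl⟩ mb.2
    rwa [g_one] at this
  have gle : gfun ((a + 1 / 2) / μ) ≤ 1 / π := by
    have := g_anti.antitoneOn ⟨le_rfl, zero_le_one⟩ mb mb.1
    rwa [g_zero] at this
  set B := μ * gfun ((a + 1 / 2) / μ) with hB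
  have hB0 : 0 ≤ B := by positivity
  have hA : μ * gfun (a / μ) ≤ B + 1 / 4 := by
    have := mul_le_mul_of_nonneg_left hlip hμ0.le
    have e : μ * (((a + 1 / 2) / μ - a / μ) / 2) = 1 / 4 := by field_simp; ring
    rw [e] at this
    linarith
  set N := ⌊B + 1 / 4⌋₊ with hN
  have hN1 : (N : ℝ) ≤ B + 1 / 4 := Nat.floor_le (by linarith)
  have hN2 : B + 1 / 4 < N + 1 := Nat.lt_floor_add_one _
  have hNnn : (0:ℝ) ≤ N := Nat.cast_nonneg N
  have hsum : (∑' k : ℕ, if 1 ≤ k ∧ (k : ℝ) - 1 / 4 ≤ B then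
            μ * h (((k : ℝ) - 1 / 4) / μ) - a else 0) =
      ∑ j ∈ Finset.range N, Ffun h μ a (j + 3 / 4) := by
    rw [tsum_eq_sum (s := Finset.range (N + 1)), Finset.sum_range_succ']
    · simp only [nonpos_iff_eq_zero, one_ne_zero, false_and, if_false, add_zero]
      refine Finset.sum_congr rfl fun j hj => ?_
      have hj' : j + 1 ≤ N := Finset.mem_range.1 hj
      have hj2 : (j:ℝ) + 1 ≤ N := by exact_mod_cast hj'
      have e : ((j + 1 : ℕ) : ℝ) - 1 / 4 = j + 3 / 4 := by push_cast; ring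
      rw [e, if_pos ⟨by omega, by linarith⟩]
      have hjB : (j + 3 / 4 : ℝ) ≤ B := by linarith
      have hy : (j + 3 / 4 : ℝ) / μ ≤ gfun ((a + 1 / 2) / μ) := by
        rw [div_le_iff₀ hμ0, mul_comm]; exact hjB
      have hy0 : 0 ≤ (j + 3 / 4 : ℝ) / μ := by positivity
      have hh : hext h ((j + 3 / 4 : ℝ) / μ) = h ((j + 3 / 4 : ℝ) / μ) := if_pos (hy.trans gle)
      have hm := hext_mem (h := h) h_maps hy0
      have hge : (a + 1 / 2) / μ ≤ hext h ((j + 3 / 4 : ℝ) / μ) := by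
        refine (g_anti.le_iff_ge hm mb).1 ?_
        exact (g_hext_le h_maps h_right_inv hy0).trans hy
      rw [div_le_iff₀ hμ0] at hge
      unfold Ffun
      rw [max_eq_left (by linarith), hh]
    · intro k hk
      rw [if_neg]
      rintro ⟨_, h2⟩
      have : N + 1 ≤ k := by simpa using hk
      have : (N : ℝ) + 1 ≤ k := by exact_mod_cast this
      linarith
  have hF1 : Ffun h μ a (N + 3 / 4) ≤ 1 / 2 := by
    have : hext h ((N + 3 / 4) / μ) ≤ (a + 1 / 2) / μ := by
      rw [hext_le_iff h_maps h_right_inv (by positivity) mb, le_div_iff₀ hμ0]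
      linarith
    rw [le_div_iff₀ hμ0] at this
    exact max_le (by linarith) (by norm_num)
  have hFnn : ∀ y, 0 ≤ Ffun h μ a y := fun y => le_max_right _ _
  have hF2 : Ffun h μ a ((N + 1 : ℕ) + 3 / 4) = 0 := by
    have : hext h (((N + 1 : ℕ) + 3 / 4) / μ) ≤ a / μ := by
      rw [hext_le_iff h_maps h_right_inv (by positivity) ma, le_div_iff₀ hμ0]
      push_cast
      linarith
    rw [le_div_iff₀ hμ0] at this
    exact max_eq_right (by linarith)
  have main := conv_main (F_convex h_maps h_right_inv (a := a) hμ0)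
    (F_anti h_maps h_right_inv hμ0) (N + 1) hFnn hF2
  obtain ⟨d1, d2⟩ := F_drop h_maps h_right_inv (a := a) hμ0 (by linarith)
  rw [← F_integral h_maps h_right_inv hμ0 ha (by linarith) (by push_cast; linarith),
    Finset.sum_range_succ] at main
  rw [hsum]
  have hm1 : 1 ≤ μ ^ ((1 : ℝ) / 3) := Real.one_le_rpow (by linarith) (by norm_num)
  have := hFnn (N + 3 / 4)
  rw [d1] at main d2
  rw [abs_le] at main ⊢
  constructor <;> linarith [main.1, main.2]

/-- the Euler–Maclaurin evaluation of the main sum, with error `O(μ^{1/3})`. -/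
theorem euler_maclaurin_main_sum (d : ℕ) (hd : 3 ≤ d) (h : ℝ → ℝ)
    (h_maps : ∀ y ∈ Set.Icc (0:ℝ) (1 / π), h y ∈ Set.Icc (0:ℝ) 1)
    (h_right_inv : ∀ y ∈ Set.Icc (0:ℝ) (1 / π), gfun (h y) = y)
    (h_left_inv : ∀ t ∈ Set.Icc (0:ℝ) 1, h (gfun t) = t) :
    ∃ C : ℝ, 0 < C ∧ ∀ μ : ℝ, 2 ≤ μ → ∀ l : ℕ, (l : ℝ) < μ - (d : ℝ) / 2 + 1 →
      |(∑' k : ℕ, if 1 ≤ k ∧ (k : ℝ) - 1 / 4 ≤ μ * gfun (((l : ℝ) + (d : ℝ) / 2 - 1) / μ) then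
            μ * h (((k : ℝ) - 1 / 4) / μ) - (l : ℝ) - ((d : ℝ) - 3) / 2
          else 0) -
          (∫ t in ((l : ℝ) + ((d : ℝ) - 3) / 2)..μ, μ * gfun (t / μ)) +
          (1 / 4) * (μ - (l : ℝ) - ((d : ℝ) - 3) / 2)| ≤ C * μ ^ ((1 : ℝ) / 3) := by
  refine ⟨5, by norm_num, fun μ hμ l hl => ?_⟩
  have hd' : (3:ℝ) ≤ d := by exact_mod_cast hd
  have hl0 : (0:ℝ) ≤ l := Nat.cast_nonneg l
  have := main_core h h_maps h_right_inv (μ := μ) (a := (l:ℝ) + ((d:ℝ) - 3) / 2) hμ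
    (by linarith) (by linarith)
  rw [show (l:ℝ) + ((d:ℝ) - 3) / 2 + 1 / 2 = (l:ℝ) + (d:ℝ) / 2 - 1 by ring] at this
  simpa only [sub_sub] using this
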